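/- arXiv:1304.7952 — 5 statements merged into one kernel-verified Lean document; each statement's English description precedes it below -/
import Mathlib

section
/- Let N ≥ 0, let w₀,…,w_N be integers, and let ℂ* act on ℙ^N(ℂ) by η·(x₀:…:x_N) = (η^{w₀}x₀:…:η^{w_N}x_N). Let c₁ < … < c_r be the distinct weight values, C_i = {j : w_j = c_i}, and ℙ^N_i = {(y₀:…:y_N) : ∃ j ∈ C_i with y_j ≠ 0, and y_j = 0 for all j ∈ C₁ ∪ … ∪ C_{i−1}}. For a fixed point x ∈ W_i = {(x₀:…:x_N) : x_j = 0 for all j ∉ C_i}, the attracting set ℙ^N_x = {y ∈ ℙ^N(ℂ) : η·y → x as η → 0} equals the set of points y ∈ ℙ^N_i whose coordinate vector restricted to the indices in C_i is a nonzero scalar multiple of that of x; moreover ℙ^N_x is a closed subset of ℙ^N_i (with its subspace topology). -/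
open scoped LinearAlgebra.Projectivization
open Filter Topology

/-- The quotient topology on `ℙ^N(ℂ)`, as the quotient of `ℂ^{N+1} ∖ {0}`
by nonzero scalar multiplication. -/
noncomputable instance projTopology (N : ℕ) :
    TopologicalSpace (ℙ ℂ (Fin (N + 1) → ℂ)) :=
  inferInstanceAs (TopologicalSpace (Quotient (projectivizationSetoid ℂ (Fin (N + 1) → ℂ))))

/-- The filter of punctured neighbourhoods of `0` in `ℂ`, restricted to `ℂ*`. -/
noncomputable def zeroFilter : Filter ℂˣ := Filter.comap (Units.val) (𝓝[≠] (0 : ℂ))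

/-- The action of `η ∈ ℂ*` on `ℙ^N(ℂ)` given by
`η·(x₀:…:x_N) = (η^{w₀}x₀:…:η^{w_N}x_N)`. -/
noncomputable def wAct {N : ℕ} (w : Fin (N + 1) → ℤ) (η : ℂˣ)
    (x : ℙ ℂ (Fin (N + 1) → ℂ)) : ℙ ℂ (Fin (N + 1) → ℂ) :=
  Projectivization.mk ℂ (fun j => (η : ℂ) ^ (w j) * x.rep j) (by
    intro h
    apply x.rep_nonzero
    funext j
    have h1 : (η : ℂ) ^ (w j) * x.rep j = 0 := congrFun h j
    rcases mul_eq_zero.1 h1 with h2 | h2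
    · exact absurd h2 (zpow_ne_zero _ η.ne_zero)
    · exact h2)

/-- The stratum `ℙ^N_c` attached to a weight value `c`. -/
def Pstratum {N : ℕ} (w : Fin (N + 1) → ℤ) (c : ℤ) : Set (ℙ ℂ (Fin (N + 1) → ℂ)) :=
  {y | (∃ j : Fin (N + 1), w j = c ∧ y.rep j ≠ 0) ∧
    ∀ j : Fin (N + 1), w j < c → y.rep j = 0}


section helpers

variable {N : ℕ}

lemma aux_isQuotientMap : IsQuotientMap
    (Projectivization.mk' ℂ : {v : Fin (N + 1) → ℂ // v ≠ 0} → ℙ ℂ (Fin (N + 1) → ℂ)) :=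
  isQuotientMap_quot_mk

lemma aux_rep (v : Fin (N + 1) → ℂ) (hv : v ≠ 0) :
    ∃ a : ℂ, a ≠ 0 ∧ ∀ j, (Projectivization.mk ℂ v hv).rep j = a * v j := by
  obtain ⟨a, ha⟩ := Projectivization.exists_smul_eq_mk_rep ℂ v hv
  exact ⟨a, a.ne_zero, fun j => by rw [← ha]; rfl⟩

lemma aux_coord (j : Fin (N + 1)) :
    Continuous (fun v : {v : Fin (N + 1) → ℂ // v ≠ 0} => v.1 j) :=
  (continuous_apply j).comp continuous_subtype_val

lemma aux_open (k : Fin (N + 1)) : IsOpen {p : ℙ ℂ (Fin (N + 1) → ℂ) | p.rep k ≠ 0} := by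
  rw [← aux_isQuotientMap.isOpen_preimage]
  have : (Projectivization.mk' ℂ : {v : Fin (N + 1) → ℂ // v ≠ 0} → ℙ ℂ (Fin (N + 1) → ℂ)) ⁻¹'
      {p : ℙ ℂ (Fin (N + 1) → ℂ) | p.rep k ≠ 0} = {v | v.1 k ≠ 0} := by
    ext ⟨v, hv⟩
    obtain ⟨a, ha, h⟩ := aux_rep v hv
    have h' := h k
    change (Projectivization.mk ℂ v hv).rep k ≠ 0 ↔ v k ≠ 0
    rw [h']; simp [ha]
  rw [this]
  exact isOpen_ne_fun (aux_coord k) continuous_const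

lemma aux_cont (j k : Fin (N + 1)) :
    ContinuousOn (fun p : ℙ ℂ (Fin (N + 1) → ℂ) => p.rep j / p.rep k) {p | p.rep k ≠ 0} := by
  rw [aux_isQuotientMap.continuousOn_isOpen_iff (aux_open k)]
  have : ContinuousOn (fun v : {v : Fin (N + 1) → ℂ // v ≠ 0} => v.1 j / v.1 k)
      {v | v.1 k ≠ 0} := by
    apply ContinuousOn.div (aux_coord j).continuousOn (aux_coord k).continuousOn
    intro v hv; exact hv
  refine (this.mono ?_).congr ?_
  · rintro ⟨v, hv⟩ h
    obtain ⟨a, ha, h2⟩ := aux_rep v hv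
    change (Projectivization.mk ℂ v hv).rep k ≠ 0 at h
    rw [h2] at h
    exact right_ne_zero_of_mul h
  · rintro ⟨v, hv⟩ _
    obtain ⟨a, ha, h2⟩ := aux_rep v hv
    change (Projectivization.mk ℂ v hv).rep j / (Projectivization.mk ℂ v hv).rep k = v j / v k
    rw [h2, h2, mul_div_mul_left _ _ ha]

lemma aux_closed (j k : Fin (N + 1)) (s t : ℂ) :
    IsClosed {p : ℙ ℂ (Fin (N + 1) → ℂ) | p.rep j * s = p.rep k * t} := by
  rw [← aux_isQuotientMap.isClosed_preimage]
  have : (Projectivization.mk' ℂ : {v : Fin (N + 1) → ℂ // v ≠ 0} → ℙ ℂ (Fin (N + 1) → ℂ)) ⁻¹'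
      {p : ℙ ℂ (Fin (N + 1) → ℂ) | p.rep j * s = p.rep k * t} =
      {v | v.1 j * s = v.1 k * t} := by
    ext ⟨v, hv⟩
    obtain ⟨a, ha, h⟩ := aux_rep v hv
    change (Projectivization.mk ℂ v hv).rep j * s = (Projectivization.mk ℂ v hv).rep k * t ↔
      v j * s = v k * t
    rw [h, h, mul_assoc, mul_assoc]; simp [ha]
  rw [this]
  exact isClosed_eq ((aux_coord j).mul continuous_const) ((aux_coord k).mul continuous_const)

instance aux_neBot : zeroFilter.NeBot := by
  unfold zeroFilter
  refine Filter.NeBot.comap_of_range_mem (inferInstance) ?_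
  filter_upwards [self_mem_nhdsWithin] with z hz
  exact ⟨Units.mk0 z hz, rfl⟩

lemma aux_val : Tendsto (fun η : ℂˣ => (η : ℂ)) zeroFilter (𝓝 0) :=
  tendsto_comap.mono_right nhdsWithin_le_nhds

lemma aux_zpow {m : ℤ} (hm : 0 < m) :
    Tendsto (fun η : ℂˣ => (η : ℂ) ^ m) zeroFilter (𝓝 0) := by
  lift m to ℕ using hm.le
  have h : m ≠ 0 := by rintro rfl; simp at hm
  have := aux_val.pow m
  simpa [h] using this

lemma aux_bwd (w : Fin (N + 1) → ℤ) (c : ℤ) (x y : ℙ ℂ (Fin (N + 1) → ℂ))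
    (hsupp : ∀ j : Fin (N + 1), w j ≠ c → x.rep j = 0)
    (hy : ∀ j : Fin (N + 1), w j < c → y.rep j = 0) (t : ℂ) (ht : t ≠ 0)
    (h : ∀ j : Fin (N + 1), w j = c → y.rep j = t * x.rep j) :
    Tendsto (fun η : ℂˣ => wAct w η y) zeroFilter (𝓝 x) := by
  have hne : ∀ η : ℂˣ, (fun j => (η : ℂ) ^ (w j - c) * y.rep j) ≠ 0 := by
    intro η h0
    apply y.rep_nonzero
    funext j
    have h1 : (η : ℂ) ^ (w j - c) * y.rep j = 0 := congrFun h0 j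
    exact (mul_eq_zero.1 h1).resolve_left (zpow_ne_zero _ η.ne_zero)
  have hx0 : t • x.rep ≠ 0 := smul_ne_zero ht x.rep_nonzero
  have e1 : ∀ η : ℂˣ, wAct w η y =
      Projectivization.mk' ℂ ⟨fun j => (η : ℂ) ^ (w j - c) * y.rep j, hne η⟩ := by
    intro η
    unfold wAct
    change _ = Projectivization.mk ℂ _ _
    rw [Projectivization.mk_eq_mk_iff']
    refine ⟨(η : ℂ) ^ c, ?_⟩
    funext j
    change (η : ℂ) ^ c * ((η : ℂ) ^ (w j - c) * y.rep j) = _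
    rw [← mul_assoc, ← zpow_add₀ η.ne_zero]; simp
  have e2 : x = Projectivization.mk' ℂ ⟨t • x.rep, hx0⟩ := by
    change _ = Projectivization.mk ℂ _ _
    conv_lhs => rw [← x.mk_rep]
    rw [Projectivization.mk_eq_mk_iff']
    exact ⟨t⁻¹, by rw [smul_smul, inv_mul_cancel₀ ht, one_smul]⟩
  simp_rw [e1]
  conv => enter [3]; rw [e2]
  refine (aux_isQuotientMap.continuous.tendsto _).comp ?_
  rw [tendsto_subtype_rng, tendsto_pi_nhds]
  intro j
  change Tendsto (fun η : ℂˣ => (η : ℂ) ^ (w j - c) * y.rep j) zeroFilter (𝓝 (t * x.rep j))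
  rcases lt_trichotomy (w j) c with hj | hj | hj
  · rw [hy j hj, hsupp j hj.ne]; simp
  · rw [← h j hj, hj]; simp
  · rw [hsupp j hj.ne']
    simpa using (aux_zpow (sub_pos.2 hj)).mul_const (y.rep j)

lemma aux_fwd (w : Fin (N + 1) → ℤ) (c : ℤ) (x y : ℙ ℂ (Fin (N + 1) → ℂ))
    (hsupp : ∀ j : Fin (N + 1), w j ≠ c → x.rep j = 0)
    (k : Fin (N + 1)) (hk : x.rep k ≠ 0)
    (h : Tendsto (fun η : ℂˣ => wAct w η y) zeroFilter (𝓝 x)) :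
    y.rep k ≠ 0 ∧ (∀ j : Fin (N + 1), w j < c → y.rep j = 0) ∧
    ∀ j : Fin (N + 1), w j = c → y.rep j = (y.rep k / x.rep k) * x.rep j := by
  have hwk : w k = c := by by_contra h'; exact hk (hsupp k h')
  have hyk : y.rep k ≠ 0 := by
    obtain ⟨η, hη⟩ := (h.eventually ((aux_open k).mem_nhds hk)).exists
    intro h0
    obtain ⟨a, ha, h2⟩ := aux_rep (fun j => (η : ℂ) ^ (w j) * y.rep j) (by
      intro h
      apply y.rep_nonzero
      funext j
      have h1 : (η : ℂ) ^ (w j) * y.rep j = 0 := congrFun h j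
      exact (mul_eq_zero.1 h1).resolve_left (zpow_ne_zero _ η.ne_zero))
    apply hη
    change (Projectivization.mk ℂ (fun j => (η : ℂ) ^ (w j) * y.rep j) _).rep k = 0
    rw [h2]; simp [h0]
  have key : ∀ j, Tendsto (fun η : ℂˣ => (η : ℂ) ^ (w j - c) * (y.rep j / y.rep k)) zeroFilter
      (𝓝 (x.rep j / x.rep k)) := by
    intro j
    have h3 := ((aux_cont j k).continuousAt ((aux_open k).mem_nhds hk)).tendsto.comp h
    refine h3.congr ?_
    intro η
    obtain ⟨a, ha, h2⟩ := aux_rep (fun j => (η : ℂ) ^ (w j) * y.rep j) (by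
      intro h
      apply y.rep_nonzero
      funext j
      have h1 : (η : ℂ) ^ (w j) * y.rep j = 0 := congrFun h j
      exact (mul_eq_zero.1 h1).resolve_left (zpow_ne_zero _ η.ne_zero))
    change (Projectivization.mk ℂ (fun j => (η : ℂ) ^ (w j) * y.rep j) _).rep j /
      (Projectivization.mk ℂ (fun j => (η : ℂ) ^ (w j) * y.rep j) _).rep k = _
    rw [h2, h2, mul_div_mul_left _ _ ha, hwk, zpow_sub₀ η.ne_zero, mul_div_mul_comm]
  refine ⟨hyk, ?_, ?_⟩
  · intro j hj
    have h4 := (aux_zpow (sub_pos.2 hj)).mul (key j)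
    have h5 : Tendsto (fun _ : ℂˣ => y.rep j / y.rep k) zeroFilter
        (𝓝 (0 * (x.rep j / x.rep k))) := by
      refine h4.congr ?_
      intro η
      rw [← mul_assoc, ← zpow_add₀ η.ne_zero]; simp
    have h6 := tendsto_nhds_unique h5 tendsto_const_nhds
    rw [zero_mul] at h6
    exact (div_eq_zero_iff.1 h6.symm).resolve_right hyk
  · intro j hj
    have h4 := key j
    simp only [hj, sub_self, zpow_zero, one_mul] at h4
    have h6 := tendsto_nhds_unique h4 tendsto_const_nhds
    field_simp at h6 ⊢
    linear_combination -h6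

end helpers

/-- For a fixed point `x` supported on the coordinates of weight `c`, the
attracting set of `x` is the set of points `y` in the stratum `ℙ^N_c` whose
coordinates of weight `c` form a nonzero scalar multiple of those of `x`;
moreover it is closed in `ℙ^N_c` for the subspace topology. -/
theorem statement3 (N : ℕ) (w : Fin (N + 1) → ℤ) (c : ℤ) (hc : c ∈ Set.range w)
    (x : ℙ ℂ (Fin (N + 1) → ℂ))
    (hfix : ∀ η : ℂˣ, wAct w η x = x)
    (hsupp : ∀ j : Fin (N + 1), w j ≠ c → x.rep j = 0) :
    ({y : ℙ ℂ (Fin (N + 1) → ℂ) |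
        Filter.Tendsto (fun η : ℂˣ => wAct w η y) zeroFilter (𝓝 x)} =
      {y : ℙ ℂ (Fin (N + 1) → ℂ) | y ∈ Pstratum w c ∧
        ∃ t : ℂ, t ≠ 0 ∧ ∀ j : Fin (N + 1), w j = c → y.rep j = t * x.rep j}) ∧
    IsClosed {y : ↥(Pstratum w c) |
      Filter.Tendsto (fun η : ℂˣ => wAct w η (y : ℙ ℂ (Fin (N + 1) → ℂ)))
        zeroFilter (𝓝 x)} := by
  obtain ⟨k, hk⟩ : ∃ k, x.rep k ≠ 0 := by
    by_contra! h
    exact x.rep_nonzero (funext h)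
  have hwk : w k = c := by by_contra h'; exact hk (hsupp k h')
  have main : ∀ y : ℙ ℂ (Fin (N + 1) → ℂ),
      Filter.Tendsto (fun η : ℂˣ => wAct w η y) zeroFilter (𝓝 x) ↔
      (y ∈ Pstratum w c ∧
        ∃ t : ℂ, t ≠ 0 ∧ ∀ j : Fin (N + 1), w j = c → y.rep j = t * x.rep j) := by
    intro y
    constructor
    · intro h
      obtain ⟨h1, h2, h3⟩ := aux_fwd w c x y hsupp k hk h
      exact ⟨⟨⟨k, hwk, h1⟩, h2⟩, _, div_ne_zero h1 hk, h3⟩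
    · rintro ⟨⟨_, h2⟩, t, ht, h3⟩
      exact aux_bwd w c x y hsupp h2 t ht h3
  refine ⟨Set.ext main, ?_⟩
  have hcl : IsClosed (⋂ j ∈ {j | w j = c},
      {p : ℙ ℂ (Fin (N + 1) → ℂ) | p.rep j * x.rep k = p.rep k * x.rep j}) :=
    isClosed_biInter fun j _ => aux_closed j k _ _
  convert hcl.preimage (continuous_subtype_val (p := fun y => y ∈ Pstratum w c)) using 1
  ext ⟨y, hy⟩
  simp only [Set.mem_setOf_eq, Set.mem_preimage, Set.mem_iInter]
  rw [main]
  constructor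
  · rintro ⟨_, t, ht, h⟩ j hj
    rw [h j hj, h k hwk]; ring
  · intro h
    refine ⟨hy, y.rep k / x.rep k, div_ne_zero ?_ hk, ?_⟩
    · intro h0
      obtain ⟨j, hj, hj0⟩ := hy.1
      have := h j hj
      rw [h0, zero_mul] at this
      exact hj0 ((mul_eq_zero.1 this).resolve_right hk)
    · intro j hj
      have := h j hj
      field_simp
      exact this
end

section
/- Let X and Y be topological spaces carrying continuous actions of the topological group ℂ* = ℂ∖{0}, with Y Hausdorff, and suppose the action on X is filtrable, i.e., every point of X converges, as η → 0, to some fixed point of X. Let π : X → Y be a continuous, surjective, ℂ*-equivariant map. Then π maps the set of fixed points of X onto the set of fixed points of Y, and for every fixed point y of Y the attracting set Y_y is the union of the images π(X_x), taken over all fixed points x of X with π(x) = y. -/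
open Filter Topology

/-- A point is fixed if it is fixed by every `η ∈ ℂ*`. -/
def IsCFixed {X : Type*} [MulAction ℂˣ X] (x : X) : Prop := ∀ η : ℂˣ, η • x = x

/-- The attracting set of a point `x₀` : the points converging to `x₀` as `η → 0`. -/
noncomputable def attractSet (X : Type*) [TopologicalSpace X] [MulAction ℂˣ X] (x₀ : X) :
    Set X :=
  {x | Filter.Tendsto (fun η : ℂˣ => η • x) zeroFilter (𝓝 x₀)}

instance zeroFilter_neBot : zeroFilter.NeBot := by
  unfold zeroFilter
  refine Filter.NeBot.comap_of_range_mem inferInstance ?_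
  filter_upwards [self_mem_nhdsWithin] with z hz
  exact ⟨Units.mk0 z hz, rfl⟩

theorem attract_map {X Y : Type*} [TopologicalSpace X] [TopologicalSpace Y]
    [MulAction ℂˣ X] [MulAction ℂˣ Y]
    (π : X → Y) (hcont : Continuous π)
    (hequiv : ∀ (η : ℂˣ) (x : X), π (η • x) = η • π x) {x x₀ : X}
    (h : x ∈ attractSet X x₀) : π x ∈ attractSet Y (π x₀) := by
  have h1 : Tendsto (fun η : ℂˣ => π (η • x)) zeroFilter (𝓝 (π x₀)) :=
    (hcont.tendsto x₀).comp h
  simp only [hequiv] at h1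
  exact h1

/-- If `π : X → Y` is a continuous surjective `ℂ*`-equivariant map, `Y` Hausdorff and
the action on `X` filtrable, then `π` maps the fixed points of `X` onto those of `Y`,
and the attracting set of a fixed point `y` of `Y` is the union of the images of the
attracting sets of the fixed points of `X` lying over `y`. -/
theorem statement5 {X Y : Type*} [TopologicalSpace X] [TopologicalSpace Y] [T2Space Y]
    [MulAction ℂˣ X] [ContinuousSMul ℂˣ X] [MulAction ℂˣ Y] [ContinuousSMul ℂˣ Y]
    (π : X → Y) (hcont : Continuous π) (hsurj : Function.Surjective π)
    (hequiv : ∀ (η : ℂˣ) (x : X), π (η • x) = η • π x)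
    (hfiltr : ∀ x : X, ∃ x₀ : X, IsCFixed x₀ ∧ x ∈ attractSet X x₀) :
    π '' {x : X | IsCFixed x} = {y : Y | IsCFixed y} ∧
    ∀ y : Y, IsCFixed y →
      attractSet Y y = ⋃ x ∈ {x : X | IsCFixed x ∧ π x = y}, π '' attractSet X x := by
  refine ⟨?_, ?_⟩
  · ext y
    constructor
    · rintro ⟨x, hx, rfl⟩ η
      rw [← hequiv, hx η]
    · intro hy
      obtain ⟨x, rfl⟩ := hsurj y
      obtain ⟨x₀, h0, hx⟩ := hfiltr x
      refine ⟨x₀, h0, ?_⟩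
      have h1 : Tendsto (fun η : ℂˣ => η • π x) zeroFilter (𝓝 (π x₀)) :=
        attract_map π hcont hequiv hx
      have h2 : (fun η : ℂˣ => η • π x) = fun _ => π x := funext hy
      rw [h2] at h1
      exact tendsto_nhds_unique h1 tendsto_const_nhds
  · intro y hy
    ext z
    simp only [Set.mem_iUnion, Set.mem_setOf_eq, exists_prop]
    constructor
    · intro hz
      obtain ⟨x, rfl⟩ := hsurj z
      obtain ⟨x₀, h0, hx⟩ := hfiltr x
      exact ⟨x₀, ⟨h0, tendsto_nhds_unique (attract_map π hcont hequiv hx) hz⟩, x, hx, rfl⟩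
    · rintro ⟨x₀, ⟨h0, rfl⟩, x, hx, rfl⟩
      exact attract_map π hcont hequiv hx
end

section
/- Let X and Y be topological spaces carrying continuous actions of the topological group ℂ* = ℂ∖{0}, each with only finitely many fixed points, and let π : X → Y be a continuous, ℂ*-equivariant, closed map. On the fixed points of X (respectively of Y), let ≺ be the reflexive-transitive closure of the relation x ≺₀ x' ⟺ cl(X_x) ∩ X_{x'} ≠ ∅ (respectively y ≺₀ y' ⟺ cl(Y_y) ∩ Y_{y'} ≠ ∅), where cl denotes topological closure. Then for any fixed points x, x' of X, x ≺ x' implies π(x) ≺ π(x'). -/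
open Filter Topology

/-- The one-step relation `x ≺₀ x'` on fixed points : `cl(X_x) ∩ X_{x'} ≠ ∅`. -/
noncomputable def precRel (X : Type*) [TopologicalSpace X] [MulAction ℂˣ X]
    (a b : X) : Prop :=
  IsCFixed a ∧ IsCFixed b ∧ (closure (attractSet X a) ∩ attractSet X b).Nonempty

/-- If `π : X → Y` is a continuous, closed, `ℂ*`-equivariant map between spaces with
finitely many fixed points, then the preorder `≺` (the reflexive-transitive closure
of `≺₀`) is compatible with `π` : `x ≺ x'` implies `π(x) ≺ π(x')`. -/
theorem statement6 {X Y : Type*} [TopologicalSpace X] [TopologicalSpace Y]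
    [MulAction ℂˣ X] [ContinuousSMul ℂˣ X] [MulAction ℂˣ Y] [ContinuousSMul ℂˣ Y]
    (hXfin : {x : X | IsCFixed x}.Finite) (hYfin : {y : Y | IsCFixed y}.Finite)
    (π : X → Y) (hcont : Continuous π) (hclosed : IsClosedMap π)
    (hequiv : ∀ (η : ℂˣ) (x : X), π (η • x) = η • π x)
    (x x' : X) (hx : IsCFixed x) (hx' : IsCFixed x')
    (h : Relation.ReflTransGen (precRel X) x x') :
    Relation.ReflTransGen (precRel Y) (π x) (π x') := by
  have hfix : ∀ a : X, IsCFixed a → IsCFixed (π a) := by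
    intro a ha η
    rw [← hequiv, ha η]
  have hatt : ∀ a b : X, b ∈ attractSet X a → π b ∈ attractSet Y (π a) := by
    intro a b hb
    have h1 : Tendsto (fun η : ℂˣ => π (η • b)) zeroFilter (𝓝 (π a)) :=
      (hcont.tendsto a).comp hb
    simpa only [attractSet, Set.mem_ofPred_eq, hequiv] using h1
  refine Relation.ReflTransGen.lift π ?_ _ _ h
  rintro a b ⟨ha, hb, z, hz1, hz2⟩
  exact ⟨hfix a ha, hfix b hb, π z, map_mem_closure hcont hz1 (hatt a), hatt b z hz2⟩
end

section
/- Let X and Y be topological spaces carrying continuous actions of the topological group ℂ* = ℂ∖{0}, with Y Hausdorff, X having only finitely many fixed points, and the action on X filtrable (every point of X converges as η → 0 to some fixed point). Let π : X → Y be a continuous, surjective, ℂ*-equivariant, closed map. If y and y' are fixed points of Y with cl(Y_y) ∩ Y_{y'} ≠ ∅, then there exist fixed points x and x' of X with π(x) = y, π(x') = y', and cl(X_x) ∩ X_{x'} ≠ ∅, where cl denotes topological closure. -/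
open Filter Topology

theorem zeroFilter_neBot_s7 : zeroFilter.NeBot := by
  unfold zeroFilter
  refine Filter.comap_neBot_iff_frequently.2 ?_
  refine Filter.Eventually.frequently ?_
  filter_upwards [self_mem_nhdsWithin] with a ha
  exact ⟨Units.mk0 a ha, rfl⟩

/-- If `π : X → Y` is a continuous, surjective, closed, `ℂ*`-equivariant map, `Y`
Hausdorff, `X` with finitely many fixed points and a filtrable action, then any
one-step relation `cl(Y_y) ∩ Y_{y'} ≠ ∅` between fixed points of `Y` lifts to a
one-step relation between fixed points of `X` lying over `y` and `y'`. -/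
theorem statement7 {X Y : Type*} [TopologicalSpace X] [TopologicalSpace Y] [T2Space Y]
    [MulAction ℂˣ X] [ContinuousSMul ℂˣ X] [MulAction ℂˣ Y] [ContinuousSMul ℂˣ Y]
    (hXfin : {x : X | IsCFixed x}.Finite)
    (hfiltr : ∀ x : X, ∃ x₀ : X, IsCFixed x₀ ∧ x ∈ attractSet X x₀)
    (π : X → Y) (hcont : Continuous π) (hsurj : Function.Surjective π)
    (hclosed : IsClosedMap π)
    (hequiv : ∀ (η : ℂˣ) (x : X), π (η • x) = η • π x)
    (y y' : Y) (hy : IsCFixed y) (hy' : IsCFixed y')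
    (h : (closure (attractSet Y y) ∩ attractSet Y y').Nonempty) :
    ∃ x x' : X, IsCFixed x ∧ IsCFixed x' ∧ π x = y ∧ π x' = y' ∧
      (closure (attractSet X x) ∩ attractSet X x').Nonempty := by
  haveI := zeroFilter_neBot_s7
  have key : ∀ (w x₀ : X) (v : Y), w ∈ attractSet X x₀ → π w ∈ attractSet Y v → π x₀ = v := by
    intro w x₀ v hw hv
    have h1 : Tendsto (fun η : ℂˣ => η • π w) zeroFilter (𝓝 (π x₀)) := by
      have := (hcont.tendsto x₀).comp hw
      refine this.congr fun η => ?_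
      exact hequiv η w
    exact tendsto_nhds_unique h1 hv
  obtain ⟨z, hz, hz'⟩ := h
  have hfin : {x : X | IsCFixed x ∧ π x = y}.Finite := hXfin.subset fun x hx => hx.1
  have hC : IsClosed (⋃ x ∈ {x : X | IsCFixed x ∧ π x = y}, closure (attractSet X x)) :=
    hfin.isClosed_biUnion fun x _ => isClosed_closure
  have hsub : attractSet Y y ⊆
      π '' (⋃ x ∈ {x : X | IsCFixed x ∧ π x = y}, closure (attractSet X x)) := by
    intro v hv
    obtain ⟨w, rfl⟩ := hsurj v
    obtain ⟨x₀, hx₀, hw⟩ := hfiltr w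
    exact ⟨w, Set.mem_biUnion (show x₀ ∈ {x : X | IsCFixed x ∧ π x = y} from
      ⟨hx₀, key w x₀ y hw hv⟩) (subset_closure hw), rfl⟩
  obtain ⟨w, hw, rfl⟩ := closure_minimal hsub (hclosed _ hC) hz
  obtain ⟨x, hx, hwx⟩ := Set.mem_iUnion₂.1 hw
  obtain ⟨x', hx', hw'⟩ := hfiltr w
  exact ⟨x, x', hx.1, hx', hx.2, key w x' y' hw' hz', w, hwx, hw'⟩
end

section
/- Let X be a Hausdorff topological space with a continuous action of ℂ* = ℂ∖{0}, and let G be a finite group acting on X by homeomorphisms, with the G-action commuting with the ℂ*-action. Let π : X → X/G be the quotient map, X/G carrying the quotient topology and the induced ℂ*-action. Then for every ℂ*-fixed point y of X/G, every point of the fibre π⁻¹(y) is a ℂ*-fixed point of X; consequently π induces a bijection between the set of G-orbits of ℂ*-fixed points of X and the set of ℂ*-fixed points of X/G. -/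
open Filter Topology

section Quot

variable {X : Type*} [TopologicalSpace X] [MulAction ℂˣ X]
variable (G : Type*) [Group G] [MulAction G X] [SMulCommClass ℂˣ G X]

/-- Since the `G`-action commutes with the `ℂ*`-action, the `ℂ*`-action descends
to the quotient `X/G`. -/
noncomputable def qsmul (η : ℂˣ) :
    Quotient (MulAction.orbitRel G X) → Quotient (MulAction.orbitRel G X) :=
  Quotient.map (fun x => η • x) (by
    intro a b hab
    obtain ⟨g, rfl⟩ := hab
    exact ⟨g, (smul_comm η g b).symm⟩)

/-- Fixed points of `X/G` under the induced `ℂ*`-action. -/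
def qIsFixed (y : Quotient (MulAction.orbitRel G X)) : Prop :=
  ∀ η : ℂˣ, qsmul G η y = y

/-- Let `X` be a Hausdorff space with a continuous `ℂ*`-action and let a finite
group `G` act on `X` by homeomorphisms, commuting with the `ℂ*`-action. Then every
point of the fibre over a `ℂ*`-fixed point of `X/G` is a `ℂ*`-fixed point of `X`;
consequently the quotient map induces a bijection between the `G`-orbits of
`ℂ*`-fixed points of `X` and the `ℂ*`-fixed points of `X/G`. -/
theorem statement9 [T2Space X] [ContinuousSMul ℂˣ X] [Finite G]
    (hGcont : ∀ g : G, Continuous (fun x : X => g • x)) :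
    (∀ y : Quotient (MulAction.orbitRel G X), qIsFixed G y →
      ∀ x : X, Quotient.mk (MulAction.orbitRel G X) x = y → IsCFixed x) ∧
    (Quotient.mk (MulAction.orbitRel G X) '' {x : X | IsCFixed x} =
      {y : Quotient (MulAction.orbitRel G X) | qIsFixed G y}) ∧
    (∀ x x' : X, IsCFixed x → IsCFixed x' →
      Quotient.mk (MulAction.orbitRel G X) x = Quotient.mk (MulAction.orbitRel G X) x' →
      ∃ g : G, g • x' = x) := by
  have key : ∀ y : Quotient (MulAction.orbitRel G X), qIsFixed G y →
      ∀ x : X, Quotient.mk (MulAction.orbitRel G X) x = y → IsCFixed x := by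
    rintro _ hy x rfl η
    have hn : 0 < Nat.card G := Nat.card_pos
    obtain ⟨z, hz⟩ := IsAlgClosed.exists_pow_nat_eq (η : ℂ) hn
    have hz0 : z ≠ 0 := by
      rintro rfl
      rw [zero_pow hn.ne'] at hz
      exact η.ne_zero hz.symm
    have hη : (Units.mk0 z hz0) ^ Nat.card G = η := by
      ext
      simpa using hz
    obtain ⟨g, hg⟩ : ∃ g : G, g • x = Units.mk0 z hz0 • x :=
      Quotient.exact (s := MulAction.orbitRel G X) (hy (Units.mk0 z hz0))
    have hpow : ∀ n : ℕ, (Units.mk0 z hz0) ^ n • x = g ^ n • x := by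
      intro n
      induction n with
      | zero => simp
      | succ k ih => rw [pow_succ, mul_smul, ← hg, smul_comm, ih, ← mul_smul, ← pow_succ']
    rw [← hη, hpow, pow_card_eq_one', one_smul]
  refine ⟨key, ?_, ?_⟩
  · ext y
    constructor
    · rintro ⟨x, hx, rfl⟩ η
      exact congrArg (Quotient.mk (MulAction.orbitRel G X)) (hx η)
    · intro hy
      obtain ⟨x, rfl⟩ := Quotient.exists_rep y
      exact ⟨x, key _ hy x rfl, rfl⟩
  · intro x x' _ _ h
    exact Quotient.exact (s := MulAction.orbitRel G X) h

end Quot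
end
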